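/- Let P be an X×X row-stochastic matrix that is TP2, and let π, π̄ be probability vectors on {1,…,X} with π ≤_r π̄ in the monotone likelihood ratio (MLR) order. Then Pᵀπ ≤_r Pᵀπ̄. Consequently, if a probability vector π₀ satisfies π₀ ≤_r Pᵀπ₀, then the optimal predictor sequence π_n = (Pᵀ)ⁿπ₀ is MLR-increasing: π_n ≤_r π_{n+1} for all n ≥ 0. -/

import Mathlib

/-!
The relation `q ≤_r p` says exactly that the two-row matrix with rows `q` and `p` is TP2, and
`Pᵀq`, `Pᵀp` are the rows of the product of this matrix with `P`. So the claim is an instance of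
the stability of TP2 under matrix products, which follows from the Binet–Cauchy identity: a
`2 × 2` minor of `A * B` is a sum of products of a minor of `A` and a minor of `B`.
-/

/-- A matrix is TP2 if every 2×2 minor is nonnegative:
`M_{il} M_{kj} ≤ M_{ij} M_{kl}` whenever `i < k` and `j < l`. -/
def IsTP2 {X : ℕ} (P : Matrix (Fin X) (Fin X) ℝ) : Prop :=
  ∀ i k j l : Fin X, i < k → j < l → P i l * P k j ≤ P i j * P k l

/-- `MLRle q p` means `q ≤_r p` in the monotone likelihood ratio order:
`p(i) q(j) ≥ p(j) q(i)` whenever `i ≥ j`. -/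
def MLRle {X : ℕ} (q p : Fin X → ℝ) : Prop :=
  ∀ i j : Fin X, j ≤ i → p j * q i ≤ p i * q j

open Finset Matrix

variable {R l m n : Type*}

/-- Total positivity of order 2 of a rectangular matrix with ordered index types, in the weak sense:
only the minors of order exactly two are required to be nonnegative, not the entries. For square
real matrices indexed by `Fin X`, this unfolds to `IsTP2`. -/
def IsTotallyPositiveTwo [LT m] [LT n] [Mul R] [LE R] (A : Matrix m n R) : Prop :=
  ∀ i k j l, i < k → j < l → A i l * A k j ≤ A i j * A k l

/-- The monotone likelihood ratio order `q ≤_r p` for vectors over an ordered index type, written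
without division. For real vectors indexed by `Fin X`, this unfolds to `MLRle`. -/
def LikelihoodRatioLE [LE n] [Mul R] [LE R] (q p : n → R) : Prop :=
  ∀ i j, j ≤ i → p j * q i ≤ p i * q j

theorem likelihoodRatioLE_iff_isTotallyPositiveTwo [PartialOrder n] [CommMagma R] [Preorder R]
    {q p : n → R} : LikelihoodRatioLE q p ↔ IsTotallyPositiveTwo (of ![q, p]) := by
  constructor
  · intro h i k j l hik hjl
    obtain ⟨rfl, rfl⟩ : i = 0 ∧ k = 1 := by lia
    simpa [mul_comm] using h l j hjl.le
  · intro h i j hji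
    rcases hji.eq_or_lt with rfl | hlt
    · exact le_rfl
    · simpa [mul_comm] using h 0 1 j i Fin.zero_lt_one hlt

theorem binet_cauchy_identity [Fintype m] [LinearOrder m] [CommRing R]
    (u v x y : m → R) :
    (u ⬝ᵥ x) * (v ⬝ᵥ y) - (u ⬝ᵥ y) * (v ⬝ᵥ x) =
      ∑ a, ∑ b with a < b, (u a * v b - u b * v a) * (x a * y b - x b * y a) := by
  let f (b a : m) : R := u a * v b * (x a * y b - x b * y a)
  let : LocallyFiniteOrderTop m := .ofIci m (fun a => {b | a ≤ b}) (by simp)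
  let : LocallyFiniteOrderBot m := .ofIic m (fun a => {b | b ≤ a}) (by simp)
  calc (u ⬝ᵥ x) * (v ⬝ᵥ y) - (u ⬝ᵥ y) * (v ⬝ᵥ x)
    _ = ∑ a, ∑ b, f b a := by
      simp only [f, dotProduct, sum_mul_sum, ← sum_sub_distrib]
      exact sum_congr rfl fun a _ => sum_congr rfl fun b _ => by ring
    _ = ∑ a, ∑ b ∈ {a}ᶜ, f b a := by
      refine sum_congr rfl fun a _ => ?_
      have hdiag : f a a = 0 := by simp only [f, mul_comm (x a), sub_self, mul_zero]
      rw [← sum_compl_add_sum {a}, sum_singleton, hdiag, add_zero]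
    _ = ∑ a, ∑ b ∈ Ioi a, (f b a + f a b) := (sum_sum_Ioi_add_eq_sum_sum_off_diag f).symm
    _ = ∑ a, ∑ b with a < b, (u a * v b - u b * v a) * (x a * y b - x b * y a) := by
      simp only [filter_lt_eq_Ioi, f]
      exact sum_congr rfl fun a _ => sum_congr rfl fun b _ => by ring

section OrderedRing

variable [CommRing R] [PartialOrder R] [IsOrderedRing R]

theorem IsTotallyPositiveTwo.mul [LT l] [Fintype m] [LinearOrder m] [LT n]
    {A : Matrix l m R} {B : Matrix m n R}
    (hA : IsTotallyPositiveTwo A) (hB : IsTotallyPositiveTwo B) :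
    IsTotallyPositiveTwo (A * B) := by
  intro i k j l hik hjl
  simp only [mul_apply']
  rw [← sub_nonneg, binet_cauchy_identity]
  refine sum_nonneg fun a _ => sum_nonneg fun b hb => ?_
  have hab : a < b := (mem_filter.mp hb).2
  have hminorA : 0 ≤ A i a * A k b - A i b * A k a := sub_nonneg.mpr (hA i k a b hik hab)
  have hminorB : 0 ≤ B a j * B b l - B b j * B a l := by
    simpa only [sub_nonneg, mul_comm] using hB a b j l hab hjl
  exact mul_nonneg hminorA hminorB

theorem LikelihoodRatioLE.transpose_mulVec [Fintype m] [LinearOrder m] [PartialOrder n]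
    {P : Matrix m n R} (hP : IsTotallyPositiveTwo P) {q p : m → R} (hqp : LikelihoodRatioLE q p) :
    LikelihoodRatioLE (Pᵀ *ᵥ q) (Pᵀ *ᵥ p) := by
  rw [likelihoodRatioLE_iff_isTotallyPositiveTwo] at hqp ⊢
  simpa [mulVec_transpose, cons_mul] using hqp.mul hP

theorem LikelihoodRatioLE.transpose_pow_mulVec_succ [Fintype n] [LinearOrder n]
    {P : Matrix n n R} (hP : IsTotallyPositiveTwo P) {q : n → R}
    (hq : LikelihoodRatioLE q (Pᵀ *ᵥ q)) (k : ℕ) :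
    LikelihoodRatioLE (Pᵀ ^ k *ᵥ q) (Pᵀ ^ (k + 1) *ᵥ q) := by
  induction k with
  | zero => simpa using hq
  | succ k ih => simpa only [mulVec_mulVec, ← pow_succ'] using ih.transpose_mulVec hP

theorem stmt_7_general [Fintype n] [LinearOrder n] {P : Matrix n n R}
    (hP : IsTotallyPositiveTwo P) {q p : n → R} (hqp : LikelihoodRatioLE q p) :
    LikelihoodRatioLE (Pᵀ *ᵥ q) (Pᵀ *ᵥ p) ∧
      ∀ q₀ : n → R, LikelihoodRatioLE q₀ (Pᵀ *ᵥ q₀) →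
        ∀ k : ℕ, LikelihoodRatioLE (Pᵀ ^ k *ᵥ q₀) (Pᵀ ^ (k + 1) *ᵥ q₀) :=
  ⟨hqp.transpose_mulVec hP, fun _ hq₀ => hq₀.transpose_pow_mulVec_succ hP⟩

end OrderedRing

/-- If `P` is a TP2 row-stochastic matrix and `π ≤_r π̄`, then `Pᵀπ ≤_r Pᵀπ̄`.
Consequently, if `π₀ ≤_r Pᵀπ₀` then the predictor sequence `(Pᵀ)ⁿ π₀` is MLR increasing. -/
theorem stmt_7 (X : ℕ) (P : Matrix (Fin X) (Fin X) ℝ)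
    (hnn : ∀ i j, 0 ≤ P i j) (hrow : ∀ i, ∑ j, P i j = 1) (hTP2 : IsTP2 P)
    (π πb : Fin X → ℝ)
    (hπnn : ∀ i, 0 ≤ π i) (hπsum : ∑ i, π i = 1)
    (hπbnn : ∀ i, 0 ≤ πb i) (hπbsum : ∑ i, πb i = 1)
    (hMLR : MLRle π πb) :
    MLRle (P.transpose.mulVec π) (P.transpose.mulVec πb) ∧
    (∀ π₀ : Fin X → ℝ, (∀ i, 0 ≤ π₀ i) → (∑ i, π₀ i = 1) →
      MLRle π₀ (P.transpose.mulVec π₀) →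
      ∀ n : ℕ, MLRle ((P.transpose ^ n).mulVec π₀) ((P.transpose ^ (n + 1)).mulVec π₀)) :=
  (stmt_7_general hTP2 hMLR).imp_right fun hmono π₀ _ _ => hmono π₀
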